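/- arXiv:2604.23423 — 2 statements merged into one kernel-verified Lean document; each statement's English description precedes it below -/
import Mathlib

section
/- Let R be a ring with unity that has exactly one two-sided zero divisor. Then R is commutative. -/
/-! Let `a` be the only two-sided zero divisor, so that any `x` killed by nonzero elements on both
sides is `0` or `a`.

If `a * b = 0` and `c * a = 0` with `b, c ≠ 0`, then `b * c` is killed by `a` on both sides; this
forces `a * a = 0` (lemma `sq_eq_zero_of_unique`). There is no idempotent besides `0` and `1`, since
a nontrivial idempotent is a two-sided zero divisor, and `a` is not idempotent. Now `a * r * a` is
`0` or `a`; in the latter case `a * r` would be a nonzero idempotent, hence `1`, which is absurd.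
So `a * r * a = 0`, and consequently `r * a` and `a * r` lie in `{0, a}` for every `r`.

The left annihilator of `a` is contained in the right one. Indeed, if `r * a = 0` and `a * r = a`,
then `r * r - r` is killed by `a` on both sides, so `r` is idempotent, hence `0` or `1`, which is
impossible, or `r * r - r = a`. In the latter case `a` commutes with `r`, giving
`a = a * r = r * a = 0`, which is absurd. Hence `r * a = 0` implies `r = 0` or `r = a`. Applying this
to `x` or `x - 1`, according to whether `x * a` is `0` or `a`, gives `R = {0, a, 1, a + 1}`, which
is commutative. -/

/-- `a` is a left zero divisor: `a ≠ 0` and there is a nonzero `b` with `a * b = 0`. -/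
def IsLeftZeroDivisor {R : Type*} [Ring R] (a : R) : Prop :=
  a ≠ 0 ∧ ∃ b : R, b ≠ 0 ∧ a * b = 0

/-- `a` is a right zero divisor: `a ≠ 0` and there is a nonzero `c` with `c * a = 0`. -/
def IsRightZeroDivisor {R : Type*} [Ring R] (a : R) : Prop :=
  a ≠ 0 ∧ ∃ c : R, c ≠ 0 ∧ c * a = 0

/-- `a` is a two-sided zero divisor: it is both a left and a right zero divisor. -/
def IsTwoSidedZeroDivisor {R : Type*} [Ring R] (a : R) : Prop :=
  IsLeftZeroDivisor a ∧ IsRightZeroDivisor a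

/-- The working form of uniqueness: `x` killed on both sides is `0` or `a`. -/
theorem eq_zero_or_eq {R : Type*} [Ring R] {a : R}
    (huniq : ∀ x : R, IsTwoSidedZeroDivisor x → x = a)
    {x b c : R} (hb : b ≠ 0) (hc : c ≠ 0) (hxb : x * b = 0) (hcx : c * x = 0) :
    x = 0 ∨ x = a := by
  by_cases hx : x = 0
  · exact Or.inl hx
  · exact Or.inr (huniq x ⟨⟨hx, b, hb, hxb⟩, ⟨hx, c, hc, hcx⟩⟩)

theorem sq_eq_zero_of_unique {R : Type*} [Ring R] {a : R}
    (ha : IsTwoSidedZeroDivisor a)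
    (huniq : ∀ x : R, IsTwoSidedZeroDivisor x → x = a) : a * a = 0 := by
  obtain ⟨⟨ha0, b, hb, hab⟩, -, c, hc, hca⟩ := ha
  by_cases hbc : b * c = 0
  -- If `b * c = 0`, then `b` is itself a two-sided zero divisor.
  · have h1 : b = a := (eq_zero_or_eq huniq hc ha0 hbc hab).resolve_left hb
    rwa [h1] at hab
  · have h : b * c = a := (eq_zero_or_eq huniq ha0 ha0 (by rw [mul_assoc, hca, mul_zero])
      (by rw [← mul_assoc, hab, zero_mul])).resolve_left hbc
    calc a * a = a * b * c := by rw [mul_assoc, h]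
      _ = 0 := by rw [hab, zero_mul]

theorem idempotent_eq_zero_or_one {R : Type*} [Ring R] {a : R}
    (ha0 : a ≠ 0) (hsq : a * a = 0)
    (huniq : ∀ x : R, IsTwoSidedZeroDivisor x → x = a) {e : R} (he : e * e = e) :
    e = 0 ∨ e = 1 := by
  by_cases h1 : 1 - e = 0
  · exact Or.inr (sub_eq_zero.mp h1).symm
  · left
    rcases eq_zero_or_eq huniq h1 h1 (by rw [mul_sub, he, mul_one, sub_self])
      (by rw [sub_mul, he, one_mul, sub_self]) with h | h
    · exact h
    · rw [h, hsq] at he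
      exact absurd he.symm ha0

theorem mul_mul_eq_zero {R : Type*} [Ring R] {a : R}
    (ha0 : a ≠ 0) (hsq : a * a = 0)
    (huniq : ∀ x : R, IsTwoSidedZeroDivisor x → x = a) (r : R) : a * r * a = 0 := by
  rcases eq_zero_or_eq (x := a * r * a) huniq ha0 ha0 (by rw [mul_assoc, hsq, mul_zero])
    (by rw [← mul_assoc, ← mul_assoc, hsq, zero_mul, zero_mul]) with h | h
  · exact h
  · have he : a * r * (a * r) = a * r := by rw [← mul_assoc, h]
    exfalso
    rcases idempotent_eq_zero_or_one ha0 hsq huniq he with h0 | h1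
    · rw [h0, zero_mul] at h
      exact ha0 h.symm
    · apply ha0
      calc a = a * (a * r) := by rw [h1, mul_one]
        _ = 0 := by rw [← mul_assoc, hsq, zero_mul]

/-- The left annihilator of `a` is `{0, a}`. -/
theorem eq_zero_or_eq_of_mul_eq_zero {R : Type*} [Ring R] {a : R}
    (ha0 : a ≠ 0) (hsq : a * a = 0)
    (huniq : ∀ x : R, IsTwoSidedZeroDivisor x → x = a) {r : R} (hr : r * a = 0) :
    r = 0 ∨ r = a := by
  rcases eq_zero_or_eq (x := a * r) huniq ha0 ha0 (mul_mul_eq_zero ha0 hsq huniq r)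
    (by rw [← mul_assoc, hsq, zero_mul]) with h | h
  · exact eq_zero_or_eq huniq ha0 ha0 hr h
  · exfalso
    rcases eq_zero_or_eq (x := r * r - r) huniq ha0 ha0
      (by rw [sub_mul, mul_assoc, hr, mul_zero, sub_zero])
      (by rw [mul_sub, ← mul_assoc, h, h, sub_self]) with h2 | h2
    · rcases idempotent_eq_zero_or_one ha0 hsq huniq (sub_eq_zero.mp h2) with h3 | h3
      · rw [h3, mul_zero] at h
        exact ha0 h.symm
      · rw [h3, one_mul] at hr
        exact ha0 hr
    -- `a = r * r - r` commutes with `r`, while `r * a = 0` and `a * r = a`.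
    · apply ha0
      calc a = (r * r - r) * r := by rw [h2, h]
        _ = r * (r * r - r) := by noncomm_ring
        _ = 0 := by rw [h2, hr]

/-- A ring with unity with exactly one two-sided zero divisor is commutative. -/
theorem comm_of_exactly_one_twoSided_zeroDivisor
    {R : Type*} [Ring R]
    (hfin : {a : R | IsTwoSidedZeroDivisor a}.Finite)
    (hcard : {a : R | IsTwoSidedZeroDivisor a}.ncard = 1) :
    ∀ x y : R, x * y = y * x := by
  obtain ⟨a, hset⟩ := Set.ncard_eq_one.mp hcard
  have ha : IsTwoSidedZeroDivisor a := by
    have : a ∈ {a : R | IsTwoSidedZeroDivisor a} := by rw [hset]; rfl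
    exact this
  have huniq : ∀ x : R, IsTwoSidedZeroDivisor x → x = a := fun x hx => by
    have : x ∈ {a : R | IsTwoSidedZeroDivisor a} := hx
    rwa [hset] at this
  have ha0 : a ≠ 0 := ha.1.1
  have hsq := sq_eq_zero_of_unique ha huniq
  have key : ∀ x : R, x = 0 ∨ x = a ∨ x = 1 ∨ x = a + 1 := fun x => by
    rcases eq_zero_or_eq (x := x * a) huniq ha0 ha0 (by rw [mul_assoc, hsq, mul_zero])
      (by rw [← mul_assoc]; exact mul_mul_eq_zero ha0 hsq huniq x) with h | h
    · rcases eq_zero_or_eq_of_mul_eq_zero ha0 hsq huniq h with h | h <;> simp [h]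
    · have h' : (x - 1) * a = 0 := by rw [sub_mul, h, one_mul, sub_self]
      rcases eq_zero_or_eq_of_mul_eq_zero ha0 hsq huniq h' with h | h
      · exact Or.inr (Or.inr (Or.inl (sub_eq_zero.mp h)))
      · exact Or.inr (Or.inr (Or.inr (sub_eq_iff_eq_add.mp h)))
  intro x y
  rcases key x with rfl | rfl | rfl | rfl <;> rcases key y with rfl | rfl | rfl | rfl <;>
    noncomm_ring
end

section
/- Let R be a ring with unity that has exactly two two-sided zero divisors. Then R is commutative. -/
/-- The reduced case. -/
lemma comm_of_reduced {R : Type*} [Ring R] {p q : R}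
    (hp : p ≠ 0) (hq : q ≠ 0)
    (hD : ∀ z u v : R, u ≠ 0 → v ≠ 0 → u * z = 0 → z * v = 0 → z = 0 ∨ z = p ∨ z = q)
    (hpq : p * q = 0) (hred : ∀ z : R, z * z = 0 → z = 0) (x y : R) : x * y = y * x := by
  have hswap : ∀ u v : R, u * v = 0 → v * u = 0 := fun u v h => hred _ (by
    rw [mul_assoc, ← mul_assoc u v u, h]; simp)
  have hqp := hswap _ _ hpq
  -- Multiples of either element `a` of the pair are `0` or `a`, so commutators kill `a`.
  have key : ∀ a c : R, a ≠ 0 → c ≠ 0 → a * c = 0 →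
      (∀ z, c * z = 0 → z * c = 0 → z = 0 ∨ z = a ∨ z = c) →
      (x * y - y * x) * a = 0 := by
    intro a c ha hc hac hDc
    have h1 : ∀ w : R, w * a = 0 ∨ w * a = a := by
      intro w
      have h2 : w * a * c = 0 := by rw [mul_assoc, hac, mul_zero]
      rcases hDc (w * a) (hswap _ _ h2) h2 with h | h | h
      · exact Or.inl h
      · exact Or.inr h
      · rw [h] at h2
        exact absurd (hred _ h2) hc
    rw [sub_mul, mul_assoc, mul_assoc]
    rcases h1 x with hx | hx <;> rcases h1 y with hy | hy <;> simp [hx, hy]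
  have hzp := key p q hp hq hpq fun z h1 h2 => hD z q q hq hq h1 h2
  have hzq := key q p hq hp hqp fun z h1 h2 => by
    rcases hD z p p hp hp h1 h2 with h | h | h <;> simp [h]
  rw [← sub_eq_zero]
  rcases hD _ p p hp hp (hswap _ _ hzp) hzp with h | h | h
  · exact h
  · rw [h] at hzp
    exact absurd (hred _ hzp) hp
  · rw [h] at hzq
    exact absurd (hred _ hzq) hq

/-- The case where one of the two zero divisors has square zero. -/
lemma comm_of_sq_zero {R : Type*} [Ring R] {a b : R}
    (ha : a ≠ 0) (hb : b ≠ 0) (hab : a ≠ b)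
    (hD : ∀ z u v : R, u ≠ 0 → v ≠ 0 → u * z = 0 → z * v = 0 → z = 0 ∨ z = a ∨ z = b)
    (haa : a * a = 0) (x y : R) : x * y = y * x := by
  have hDa : ∀ z : R, a * z = 0 → z * a = 0 → z = 0 ∨ z = a ∨ z = b :=
    fun z h1 h2 => hD z a a ha ha h1 h2
  have hidem : ∀ e : R, e * e = e → e = 0 ∨ e = 1 := by
    intro e he
    by_contra! hcon
    obtain ⟨h0, h1⟩ := hcon
    have h1' : 1 - e ≠ 0 := sub_ne_zero.2 (Ne.symm h1)
    have e1 : (1 - e) * e = 0 := by rw [sub_mul, he, one_mul, sub_self]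
    have e2 : e * (1 - e) = 0 := by rw [mul_sub, he, mul_one, sub_self]
    have heb : e = b := by
      rcases hD e _ _ h1' h1' e1 e2 with h | h | h
      · exact absurd h h0
      · rw [h, haa] at he; exact absurd he.symm ha
      · exact h
    rcases hD (1 - e) _ _ h0 h0 e2 e1 with h | h | h
    · exact h1' h
    · have h3 : (1 - e) * (1 - e) = 1 - e := by rw [mul_sub, e1, mul_one, sub_zero]
      rw [h, haa] at h3
      exact ha h3.symm
    · rw [h, ← heb, he] at e1
      exact h0 e1
  -- The set `D = {0, a, b}` contains `a + b` only when `b = -a`.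
  have hsum : (a + b = 0 ∨ a + b = a ∨ a + b = b) → b = -a := by
    rintro (h | h | h)
    · exact (neg_eq_of_add_eq_zero_right h).symm
    · exact absurd (by simpa using h) hb
    · exact absurd (by simpa using h) ha
  have hne : ∀ w : R, a * w * a ≠ a := by
    intro w hw
    rcases hidem (a * w) (by rw [← mul_assoc, hw]) with h | h
    · rw [h, zero_mul] at hw
      exact ha hw.symm
    · have h2 : a * (a * w) = 0 := by rw [← mul_assoc, haa, zero_mul]
      rw [h, mul_one] at h2
      exact ha h2
  have hDw : ∀ w : R, a * w * a = 0 ∨ a * w * a = a ∨ a * w * a = b := fun w =>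
    hDa _ (by rw [← mul_assoc, ← mul_assoc, haa]; simp) (by rw [mul_assoc, haa, mul_zero])
  have hzero : ∀ w : R, a * w * a = 0 := by
    intro w
    rcases hDw w with h | h | h
    · exact h
    · exact absurd h (hne w)
    · -- Since `b = a * w * a`, the element `a` kills `a + b` on both sides, so `b = -a`.
      have hn : b = -a := by
        have hw := hDa (a + b) (by rw [← h, mul_add, haa, ← mul_assoc, ← mul_assoc, haa]; simp)
          (by rw [← h, add_mul, haa, mul_assoc, haa]; simp)
        exact hsum hw
      exact absurd (by rw [mul_neg, neg_mul, h, hn, neg_neg]) (hne (-w))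
  have hleft : ∀ w : R, w * a = 0 ∨ w * a = a ∨ w * a = -a := by
    intro w
    have hw : ∀ t : R, t * a = 0 ∨ t * a = a ∨ t * a = b := fun t =>
      hDa _ (by rw [← mul_assoc, hzero]) (by rw [mul_assoc, haa, mul_zero])
    rcases hw w with h | h | h
    · exact Or.inl h
    · exact Or.inr (Or.inl h)
    · have h2 := hw (1 + w)
      rw [add_mul, one_mul, h] at h2
      exact Or.inr (Or.inr (h.trans (hsum h2)))
  have hright : ∀ w : R, a * w = 0 ∨ a * w = a ∨ a * w = -a := by
    intro w
    have hw : ∀ t : R, a * t = 0 ∨ a * t = a ∨ a * t = b := fun t =>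
      hDa _ (by rw [← mul_assoc, haa, zero_mul]) (hzero t)
    rcases hw w with h | h | h
    · exact Or.inl h
    · exact Or.inr (Or.inl h)
    · have h2 := hw (1 + w)
      rw [mul_add, mul_one, h] at h2
      exact Or.inr (Or.inr (h.trans (hsum h2)))
  have hint : ∀ w : R, ∃ n : ℤ, (w - n) * a = 0 := by
    intro w
    rcases hleft w with h | h | h
    · exact ⟨0, by simp [h]⟩
    · exact ⟨1, by simp [sub_mul, h]⟩
    · exact ⟨-1, by simp [add_mul, h]⟩
  have hno : ∀ w : R, w * a = 0 → a * w ≠ a := by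
    intro w h1 h2
    have hwa : w * a ≠ a * w := by rw [h1, h2]; exact ha.symm
    have hcomm : w * (w * (1 - w)) = w * (1 - w) * w := by noncomm_ring
    rcases hDa (w * (1 - w))
      (by rw [← mul_assoc, h2, mul_sub, h2, mul_one, sub_self])
      (by rw [mul_assoc, sub_mul, h1, one_mul, sub_zero, h1]) with h | h | h
    · rw [mul_sub, mul_one, sub_eq_zero] at h
      rcases hidem w h.symm with h0 | h0
      · rw [h0, mul_zero] at h2
        exact ha h2.symm
      · rw [h0, one_mul] at h1
        exact ha h1
    · -- `w` commutes with `w * (1 - w)` but not with `a`.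
      rw [h] at hcomm
      exact hwa hcomm
    · have hba : b * a = 0 := by
        rw [← h, mul_assoc, sub_mul, h1, one_mul, sub_zero, h1]
      have hab' : a * b = 0 := by
        rw [← h, ← mul_assoc, h2, mul_sub, h2, mul_one, sub_self]
      have hn := hsum (hDa (a + b) (by rw [mul_add, haa, hab', add_zero])
        (by rw [add_mul, haa, hba, add_zero]))
      rw [h, hn, mul_neg, neg_mul, neg_inj] at hcomm
      exact hwa hcomm
  have hcentral : ∀ w : R, w * a = a * w := by
    intro w
    obtain ⟨n, hn⟩ := hint w
    have hn' : a * (w - n) = 0 := by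
      rcases hright (w - n) with h | h | h
      · exact h
      · exact absurd h (hno _ hn)
      · exact absurd (by rw [mul_neg, h, neg_neg]) (hno (-(w - n)) (by rw [neg_mul, hn, neg_zero]))
    rw [sub_mul, sub_eq_zero] at hn
    rw [mul_sub, sub_eq_zero] at hn'
    rw [hn, hn', (Int.cast_commute n a).eq]
  have hdecomp : ∀ w : R, ∃ n : ℤ, ∃ d : R, w = n + d ∧ (d = 0 ∨ d = a ∨ d = b) := by
    intro w
    obtain ⟨n, hn⟩ := hint w
    exact ⟨n, w - n, by abel, hDa _ (by rw [← hcentral, hn]) hn⟩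
  obtain ⟨m, c, rfl, hc⟩ := hdecomp x
  obtain ⟨n, d, rfl, hd⟩ := hdecomp y
  have hcd : Commute c d := by
    have hba : Commute b a := hcentral b
    rcases hc with rfl | rfl | rfl <;> rcases hd with rfl | rfl | rfl <;>
      first
        | exact Commute.zero_left _
        | exact Commute.zero_right _
        | exact Commute.refl _
        | exact hba
        | exact hba.symm
  exact (((Int.cast_commute m _).add_left
    ((Int.cast_commute n c).symm.add_right hcd)) : Commute (m + c) (n + d)).eq

/-- A ring with unity with exactly two two-sided zero divisors is commutative. -/
theorem comm_of_exactly_two_twoSided_zeroDivisors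
    {R : Type*} [Ring R]
    (hfin : {a : R | IsTwoSidedZeroDivisor a}.Finite)
    (hcard : {a : R | IsTwoSidedZeroDivisor a}.ncard = 2) :
    ∀ x y : R, x * y = y * x := by
  intro x y
  obtain ⟨p, q, hpq, hT⟩ := Set.ncard_eq_two.1 hcard
  have hmem : ∀ z : R, IsTwoSidedZeroDivisor z ↔ z = p ∨ z = q := fun z => by
    simpa using Set.ext_iff.1 hT z
  obtain ⟨⟨hp, v, hv, hpv⟩, -⟩ := (hmem p).2 (Or.inl rfl)
  have hq : q ≠ 0 := ((hmem q).2 (Or.inr rfl)).1.1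
  have hD : ∀ z u v : R, u ≠ 0 → v ≠ 0 → u * z = 0 → z * v = 0 → z = 0 ∨ z = p ∨ z = q := by
    intro z u v hu hv huz hzv
    by_cases hz : z = 0
    · exact Or.inl hz
    · exact Or.inr ((hmem z).1 ⟨⟨hz, v, hv, hzv⟩, hz, u, hu, huz⟩)
  by_cases hpp : p * p = 0
  · exact comm_of_sq_zero hp hq hpq hD hpp x y
  by_cases hqq : q * q = 0
  · exact comm_of_sq_zero hq hp hpq.symm
      (fun z u v h1 h2 h3 h4 => (hD z u v h1 h2 h3 h4).imp_right Or.symm) hqq x y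
  -- A nonzero element of square zero is a two-sided zero divisor, so `R` is reduced.
  have hred : ∀ z : R, z * z = 0 → z = 0 := by
    intro z hz
    by_contra h0
    rcases hD z z z h0 h0 hz hz with h | rfl | rfl
    exacts [h0 h, hpp hz, hqq hz]
  have hvp : v * p = 0 := hred _ (by rw [mul_assoc, ← mul_assoc p v p, hpv]; simp)
  have hvq : v = q := by
    rcases hD v p p hp hp hpv hvp with h | h | h
    · exact absurd h hv
    · rw [h] at hpv
      exact absurd hpv hpp
    · exact h
  exact comm_of_reduced hp hq hD (hvq ▸ hpv) hred x y
end
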